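/- Let m ≥ 10 and let π(x) = (1 − e^{−m²/4}) g_m(x) + e^{−m²/4} u_m(x), where g_m(x) = (2π)^{−1/2} e^{−(x−m)²/2} and u_m(x) = e^{−d(x,[−m,2m])²/2} / (3m + √(2π)). Then π satisfies a log-Sobolev inequality with constant 81 m⁵: for every smooth compactly supported f : ℝ → ℝ, ∫ f² log( f² / ∫ f² π dx ) π dx ≤ 2 · 81 m⁵ · ∫ (f′)² π dx. -/

import Mathlib

open MeasureTheory Real

/-- The density of N(m, 1). -/
noncomputable def gaussAt (m x : ℝ) : ℝ := Real.exp (-(x - m) ^ 2 / 2) / Real.sqrt (2 * Real.pi)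

/-- The smoothed uniform density on [−m, 2m]. -/
noncomputable def smUnif (m x : ℝ) : ℝ :=
  Real.exp (-(Metric.infDist x (Set.Icc (-m) (2 * m))) ^ 2 / 2) / (3 * m + Real.sqrt (2 * Real.pi))

/-- The unimodal target π = (1 − e^{−m²/4}) N(m,1) + e^{−m²/4} u_m. -/
noncomputable def piDens (m x : ℝ) : ℝ :=
  (1 - Real.exp (-m ^ 2 / 4)) * gaussAt m x + Real.exp (-m ^ 2 / 4) * smUnif m x

/-!
The entropy of `f²` is at most `∫ c klFun (f² / c) π` for every `c > 0`; take `c = f(m)² + κ E` with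
`E` the energy `∫ f'² π`, where `m` is the mode of the target. Where `f²` is at most `4 c`, the
first factor `c klFun (f² / c)` is at most `18 (f - f(m))² + 2 κ E`. Elsewhere it is at most
`f² log (f² / c)`, and Cauchy–Schwarz along the segment from `m` bounds `(f x - f(m))²` by
`E |x - m| / min π`, hence the logarithm by a weight `V x` of order `m² + dist(x, [-m, 2m])²`. What
remains is the weighted Hardy inequality `∫ V (f - f(m))² π ≤ C E`. Its proof on each side of the
mode is an integration by parts against an explicit solution of a Riccati inequality; on the right,
`π` enters only through the inequality `π' ≤ -dist(x, [-m, 2m]) π`, and similarly on the left, so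
that the exponentially small weight of the plateau is harmless.
-/

open Set Filter InformationTheory

section CauchySchwarz

lemma sq_setIntegral_le_measureReal_mul_setIntegral_sq {X : Type*} [MeasurableSpace X]
    {μ : Measure X} {s : Set X} {f : X → ℝ} (hs : μ s ≠ ⊤) (hf : IntegrableOn f s μ)
    (hf2 : IntegrableOn (fun x ↦ f x ^ 2) s μ) :
    (∫ x in s, f x ∂μ) ^ 2 ≤ μ.real s * ∫ x in s, f x ^ 2 ∂μ := by
  rcases eq_or_ne (μ s) 0 with h0 | h0
  · simp [Measure.restrict_eq_zero.mpr h0]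
  have jensen : (⨍ x in s, f x ∂μ) ^ 2 ≤ ⨍ x in s, f x ^ 2 ∂μ :=
    (even_two.convexOn_pow (𝕜 := ℝ)).map_set_average_le (by fun_prop) isClosed_univ h0 hs
      (by simp) hf hf2
  have hpos : 0 < μ.real s := ENNReal.toReal_pos h0 hs
  rw [setAverage_eq, setAverage_eq, smul_eq_mul, smul_eq_mul, mul_pow, inv_pow,
    inv_mul_le_iff₀ (by positivity)] at jensen
  exact jensen.trans_eq (by field_simp)

lemma sq_sub_le_abs_sub_mul_integral_deriv_sq {f : ℝ → ℝ} (hf : ContDiff ℝ 1 f) (a x : ℝ) :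
    (f x - f a) ^ 2 ≤ |x - a| * ∫ t in uIoc a x, deriv f t ^ 2 := by
  have hdf : Continuous (deriv f) := hf.continuous_deriv_one
  have ftc : ∫ t in a..x, deriv f t = f x - f a :=
    intervalIntegral.integral_deriv_eq_sub (fun t _ ↦ hf.differentiable one_ne_zero t)
      (hdf.intervalIntegrable a x)
  rw [← ftc, ← sq_abs, intervalIntegral.abs_integral_eq_abs_integral_uIoc, sq_abs]
  convert! sq_setIntegral_le_measureReal_mul_setIntegral_sq (μ := volume) (s := uIoc a x)
    (by simp) hdf.integrableOn_uIoc (hdf.pow 2).integrableOn_uIoc using 2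
  simp [Measure.real]

lemma sq_sub_le_mul_integral_deriv_sq_mul {f q : ℝ → ℝ} {a x M : ℝ} (hf : ContDiff ℝ 1 f)
    (hq : ∀ t, 0 ≤ q t) (hM : 0 ≤ M) (hfq : Integrable fun t ↦ deriv f t ^ 2 * q t)
    (hMq : ∀ t ∈ uIoc a x, |x - a| ≤ M * q t) :
    (f x - f a) ^ 2 ≤ M * ∫ t, deriv f t ^ 2 * q t :=
  calc (f x - f a) ^ 2 ≤ |x - a| * ∫ t in uIoc a x, deriv f t ^ 2 :=
        sq_sub_le_abs_sub_mul_integral_deriv_sq hf a x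
    _ = ∫ t in uIoc a x, |x - a| * deriv f t ^ 2 := (integral_const_mul _ _).symm
    _ ≤ ∫ t in uIoc a x, M * (deriv f t ^ 2 * q t) := by
        refine setIntegral_mono_on ?_ (hfq.integrableOn.const_mul M) measurableSet_uIoc
          fun t ht ↦ ?_
        · exact ((hf.continuous_deriv_one.pow 2).const_mul _).integrableOn_uIoc
        · linarith [mul_le_mul_of_nonneg_right (hMq t ht) (sq_nonneg (deriv f t))]
    _ = M * ∫ t in uIoc a x, deriv f t ^ 2 * q t := integral_const_mul _ _
    _ ≤ M * ∫ t, deriv f t ^ 2 * q t := by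
        refine mul_le_mul_of_nonneg_left (setIntegral_le_integral hfq ?_) hM
        exact Eventually.of_forall fun t ↦ mul_nonneg (sq_nonneg _) (hq t)

end CauchySchwarz

section Entropy

lemma mul_log_div_eq_mul_klFun_add (u : ℝ) {c z : ℝ} (hc : c ≠ 0) (hz : z ≠ 0) :
    u * log (u / z) = c * klFun (u / c) + (log (c / z) + 1) * u - c := by
  rcases eq_or_ne u 0 with rfl | hu
  · simp [klFun_zero]
  · rw [klFun_apply, log_div hu hz, log_div hu hc, log_div hc hz]
    field_simp
    ring

lemma klFun_le_sq_sub_one {x : ℝ} (hx : 0 ≤ x) : klFun x ≤ (x - 1) ^ 2 := by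
  rcases hx.eq_or_lt with rfl | hx
  · simp [klFun_zero]
  · have := mul_le_mul_of_nonneg_left (log_le_sub_one_of_pos hx) hx.le
    rw [klFun_apply]
    linarith

lemma mul_klFun_sq_div_le_of_sq_le {u a K : ℝ} (hK : 0 < K) (hu : u ^ 2 ≤ 4 * (a ^ 2 + K)) :
    (a ^ 2 + K) * klFun (u ^ 2 / (a ^ 2 + K)) ≤ 18 * (u - a) ^ 2 + 2 * K := by
  have hc : 0 < a ^ 2 + K := by positivity
  have hua : (u + a) ^ 2 ≤ 9 * (a ^ 2 + K) := by nlinarith [sq_nonneg (u - 2 * a)]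
  have hsplit : (u ^ 2 - (a ^ 2 + K)) ^ 2 ≤ 2 * ((u - a) ^ 2 * (u + a) ^ 2) + 2 * K ^ 2 := by
    linarith [sq_nonneg ((u - a) * (u + a) + K)]
  calc (a ^ 2 + K) * klFun (u ^ 2 / (a ^ 2 + K))
      ≤ (a ^ 2 + K) * (u ^ 2 / (a ^ 2 + K) - 1) ^ 2 := by
        gcongr
        exact klFun_le_sq_sub_one (by positivity)
    _ = (u ^ 2 - (a ^ 2 + K)) ^ 2 / (a ^ 2 + K) := by field_simp
    _ ≤ 18 * (u - a) ^ 2 + 2 * K := by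
        rw [div_le_iff₀ hc]
        have := mul_le_mul_of_nonneg_left hua (sq_nonneg (u - a))
        nlinarith [mul_nonneg hK.le (sq_nonneg a)]

lemma mul_klFun_sq_div_le_of_lt_sq {u a K V : ℝ} (hK : 0 < K) (hV : 0 ≤ V)
    (huV : 4 * (u - a) ^ 2 ≤ K * exp (V / 4)) (hu : 4 * (a ^ 2 + K) < u ^ 2) :
    (a ^ 2 + K) * klFun (u ^ 2 / (a ^ 2 + K)) ≤ V * (u - a) ^ 2 := by
  have hc : 0 < a ^ 2 + K := by positivity
  have hua : u ^ 2 ≤ 4 * (u - a) ^ 2 := by nlinarith [sq_nonneg (u - 2 * a)]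
  have hlog : log (u ^ 2 / (a ^ 2 + K)) ≤ V / 4 := by
    rw [log_le_iff_le_exp (div_pos (by linarith) hc), div_le_iff₀' hc]
    exact (hua.trans huV).trans (by gcongr; nlinarith [sq_nonneg a])
  calc (a ^ 2 + K) * klFun (u ^ 2 / (a ^ 2 + K))
      = u ^ 2 * log (u ^ 2 / (a ^ 2 + K)) + (a ^ 2 + K - u ^ 2) := by
        rw [klFun_apply]
        field_simp
        ring
    _ ≤ u ^ 2 * log (u ^ 2 / (a ^ 2 + K)) := by linarith
    _ ≤ u ^ 2 * (V / 4) := by gcongr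
    _ ≤ 4 * (u - a) ^ 2 * (V / 4) := by gcongr
    _ = V * (u - a) ^ 2 := by ring

lemma mul_klFun_sq_div_le {u a K V : ℝ} (hK : 0 < K) (hV : 18 ≤ V)
    (huV : 4 * (u - a) ^ 2 ≤ K * exp (V / 4)) :
    (a ^ 2 + K) * klFun (u ^ 2 / (a ^ 2 + K)) ≤ V * (u - a) ^ 2 + 2 * K := by
  rcases le_or_gt (u ^ 2) (4 * (a ^ 2 + K)) with hu | hu
  · exact (mul_klFun_sq_div_le_of_sq_le hK hu).trans (by gcongr)
  · exact (mul_klFun_sq_div_le_of_lt_sq hK (by linarith) huV hu).trans (by linarith)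

variable {X : Type*} [MeasurableSpace X] {μ : Measure X} {q h : X → ℝ} {c : ℝ}

lemma integrable_mul_log_div_mul (hq : Integrable q μ)
    (hh : Integrable (fun x ↦ h x * q x) μ) (hc : c ≠ 0)
    (hkl : Integrable (fun x ↦ c * klFun (h x / c) * q x) μ) (z : ℝ) :
    Integrable (fun x ↦ h x * log (h x / z) * q x) μ := by
  rcases eq_or_ne z 0 with rfl | hz
  · simp
  · refine ((hkl.add (hh.const_mul (log (c / z) + 1))).sub (hq.const_mul c)).congr
      (Eventually.of_forall fun x ↦ ?_)
    simp only [Pi.add_apply, Pi.sub_apply]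
    rw [mul_log_div_eq_mul_klFun_add _ hc hz]
    ring

-- The entropy is the minimum over `c` of the right-hand side, attained at `c = ∫ h q`.
lemma integral_mul_log_div_le_integral_mul_klFun (hq : Integrable q μ) (hq0 : ∀ x, 0 ≤ q x)
    (hq1 : ∫ x, q x ∂μ = 1) (hh : Integrable (fun x ↦ h x * q x) μ) (hh0 : ∀ x, 0 ≤ h x)
    (hc : 0 < c) (hkl : Integrable (fun x ↦ c * klFun (h x / c) * q x) μ) :
    ∫ x, h x * log (h x / ∫ y, h y * q y ∂μ) * q x ∂μ ≤ ∫ x, c * klFun (h x / c) * q x ∂μ := by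
  have hz0 : 0 ≤ ∫ y, h y * q y ∂μ := integral_nonneg fun x ↦ mul_nonneg (hh0 x) (hq0 x)
  set z := ∫ y, h y * q y ∂μ
  rcases hz0.eq_or_lt with hz' | hz'
  · simp only [← hz', div_zero, log_zero, mul_zero, zero_mul, integral_zero]
    exact integral_nonneg fun x ↦
      mul_nonneg (mul_nonneg hc.le (klFun_nonneg (div_nonneg (hh0 x) hc.le))) (hq0 x)
  have hlog : log (c / z) * z ≤ c - z := by
    have := mul_le_mul_of_nonneg_right (log_le_sub_one_of_pos (div_pos hc hz')) hz'.le
    rwa [sub_mul, div_mul_cancel₀ _ hz'.ne', one_mul] at this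
  calc ∫ x, h x * log (h x / z) * q x ∂μ
      = ∫ x, c * klFun (h x / c) * q x + (log (c / z) + 1) * (h x * q x) - c * q x ∂μ := by
        congr 1 with x
        rw [mul_log_div_eq_mul_klFun_add _ hc.ne' hz'.ne']
        ring
    _ = ∫ x, c * klFun (h x / c) * q x ∂μ + (log (c / z) + 1) * z - c := by
        rw [integral_sub (hkl.fun_add (hh.const_mul _)) (hq.const_mul c),
          integral_add hkl (hh.const_mul _), integral_const_mul, integral_const_mul, hq1, mul_one]
    _ ≤ ∫ x, c * klFun (h x / c) * q x ∂μ := by linarith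

end Entropy

section Hardy

/-- The weighted Hardy inequality `∫ V g² p ≤ C ∫ g'² p` for functions `g` vanishing at `a`, with
finiteness of the left-hand side as part of the claim. -/
def HardyInequality (C a : ℝ) (p V : ℝ → ℝ) : Prop :=
  ∀ g : ℝ → ℝ, ContDiff ℝ 1 g → g a = 0 → Integrable (fun x ↦ deriv g x ^ 2 * p x) →
    Integrable (fun x ↦ V x * g x ^ 2 * p x) ∧
      ∫ x, V x * g x ^ 2 * p x ≤ C * ∫ x, deriv g x ^ 2 * p x

/-- A nonnegative solution on `[a, ∞)` of the Riccati inequality `φ' + φ² / (C p) + V p ≤ 0`, with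
one-sided derivatives. It certifies the Hardy inequality on the half-line; the typical example is
`φ = C p u' / u` with `u` an increasing positive supersolution of `(C p u')' + V p u = 0`. -/
structure IsRiccatiSupersolution (C a : ℝ) (p V φ : ℝ → ℝ) : Prop where
  continuousOn : ContinuousOn φ (Ici a)
  nonneg : ∀ x ∈ Ici a, 0 ≤ φ x
  exists_deriv : ∀ x ∈ Ioi a, ∃ φ', HasDerivWithinAt φ φ' (Ioi x) x ∧
    φ' + φ x ^ 2 / (C * p x) + V x * p x ≤ 0

variable {C a : ℝ} {p V φ g : ℝ → ℝ}

lemma IsRiccatiSupersolution.congr {q W : ℝ → ℝ} (hφ : IsRiccatiSupersolution C a p V φ)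
    (hpq : EqOn p q (Ioi a)) (hVW : EqOn V W (Ioi a)) : IsRiccatiSupersolution C a q W φ where
  continuousOn := hφ.continuousOn
  nonneg := hφ.nonneg
  exists_deriv x hx := by
    rw [← hpq hx, ← hVW hx]
    exact hφ.exists_deriv x hx

-- Completing the square in `g'` absorbs the cross term `2 φ g g'`.
lemma deriv_mul_sq_le_of_riccati {φ₀ φ' p₀ v y y' : ℝ} (hC : 0 < C) (hp : 0 < p₀)
    (h : φ' + φ₀ ^ 2 / (C * p₀) + v * p₀ ≤ 0) :
    φ' * y ^ 2 + φ₀ * (2 * y * y') ≤ C * (y' ^ 2 * p₀) - v * y ^ 2 * p₀ := by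
  have hsq : 0 ≤ C * p₀ * (y' - φ₀ / (C * p₀) * y) ^ 2 := by positivity
  have hexpand : C * p₀ * (y' - φ₀ / (C * p₀) * y) ^ 2 =
      C * p₀ * y' ^ 2 - 2 * φ₀ * y * y' + φ₀ ^ 2 / (C * p₀) * y ^ 2 := by
    field_simp
    ring
  linarith [mul_nonpos_of_nonpos_of_nonneg h (sq_nonneg y)]

variable (hC : 0 < C) (hp : Continuous p) (hp0 : ∀ x, 0 < p x) (hV : Continuous V)

include hC hp hp0 hV

lemma IsRiccatiSupersolution.intervalIntegral_le (hφ : IsRiccatiSupersolution C a p V φ)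
    (hg : ContDiff ℝ 1 g) (hga : g a = 0) {b : ℝ} (hab : a ≤ b) :
    ∫ x in a..b, V x * g x ^ 2 * p x ≤ C * ∫ x in a..b, deriv g x ^ 2 * p x := by
  have hgc := hg.continuous
  have : Continuous (deriv g) := hg.continuous_deriv_one
  choose! φ' hφ' hriccati using hφ.exists_deriv
  have hflux := intervalIntegral.sub_le_integral_of_hasDeriv_right_of_le
    (g := fun x ↦ φ x * g x ^ 2)
    (g' := fun x ↦ φ' x * g x ^ 2 + φ x * (2 * g x * deriv g x))
    (φ := fun x ↦ C * (deriv g x ^ 2 * p x) - V x * g x ^ 2 * p x) hab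
    ((hφ.continuousOn.mono Icc_subset_Ici_self).mul (by fun_prop))
    (fun x hx ↦ (hφ' x hx.1).mul <| by
      simpa using! ((hg.differentiable one_ne_zero x).hasDerivAt.pow 2).hasDerivWithinAt)
    (Continuous.integrableOn_Icc (by fun_prop))
    (fun x hx ↦ deriv_mul_sq_le_of_riccati hC (hp0 x) (hriccati x hx.1))
  rw [intervalIntegral.integral_sub (Continuous.intervalIntegrable (by fun_prop) _ _)
    (Continuous.intervalIntegrable (by fun_prop) _ _), intervalIntegral.integral_const_mul,
    hga] at hflux
  linarith [mul_nonneg (hφ.nonneg b hab) (sq_nonneg (g b))]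

lemma IsRiccatiSupersolution.hardy_Ioi (hφ : IsRiccatiSupersolution C a p V φ)
    (hV0 : ∀ x, 0 ≤ V x) (hg : ContDiff ℝ 1 g) (hga : g a = 0)
    (hint : IntegrableOn (fun x ↦ deriv g x ^ 2 * p x) (Ioi a)) :
    IntegrableOn (fun x ↦ V x * g x ^ 2 * p x) (Ioi a) ∧
      ∫ x in Ioi a, V x * g x ^ 2 * p x ≤ C * ∫ x in Ioi a, deriv g x ^ 2 * p x := by
  have hgc := hg.continuous
  have hle : ∀ b, a ≤ b →
      ∫ x in a..b, V x * g x ^ 2 * p x ≤ C * ∫ x in Ioi a, deriv g x ^ 2 * p x := by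
    intro b hab
    refine (hφ.intervalIntegral_le hC hp hp0 hV hg hga hab).trans ?_
    rw [intervalIntegral.integral_of_le hab]
    refine mul_le_mul_of_nonneg_left (setIntegral_mono_set hint ?_ ?_) hC.le
    · exact Eventually.of_forall fun x ↦ mul_nonneg (sq_nonneg _) (hp0 x).le
    · exact Ioc_subset_Ioi_self.eventuallyLE
  have hnonneg : ∀ x, 0 ≤ V x * g x ^ 2 * p x := fun x ↦
    mul_nonneg (mul_nonneg (hV0 x) (sq_nonneg _)) (hp0 x).le
  have hVint : IntegrableOn (fun x ↦ V x * g x ^ 2 * p x) (Ioi a) := by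
    refine integrableOn_Ioi_of_intervalIntegral_norm_bounded
      (C * ∫ x in Ioi a, deriv g x ^ 2 * p x) a
      (fun b ↦ (Continuous.integrableOn_Icc (by fun_prop)).mono_set Ioc_subset_Icc_self)
      tendsto_id ?_
    filter_upwards [eventually_ge_atTop a] with b hab
    simpa only [id, norm_of_nonneg (hnonneg _)] using hle b hab
  refine ⟨hVint, le_of_tendsto (intervalIntegral_tendsto_integral_Ioi a hVint tendsto_id) ?_⟩
  filter_upwards [eventually_ge_atTop a] with b hab using hle b hab

lemma hardyInequality_of_isRiccatiSupersolution {φl φr : ℝ → ℝ} (hV0 : ∀ x, 0 ≤ V x)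
    (hr : IsRiccatiSupersolution C a p V φr)
    (hl : IsRiccatiSupersolution C (-a) (fun x ↦ p (-x)) (fun x ↦ V (-x)) φl) :
    HardyInequality C a p V := by
  intro g hg hga hint
  obtain ⟨hintr, hler⟩ := hr.hardy_Ioi hC hp hp0 hV hV0 hg hga hint.integrableOn
  obtain ⟨hintl, hlel⟩ := hl.hardy_Ioi (g := fun x ↦ g (-x)) hC (by fun_prop) (fun x ↦ hp0 (-x))
    (by fun_prop) (fun x ↦ hV0 (-x)) (hg.comp contDiff_neg) (by simpa using hga)
    (by simpa only [deriv_comp_neg, neg_sq] using hint.comp_neg.integrableOn)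
  simp only [deriv_comp_neg, neg_sq] at hlel
  rw [integral_comp_neg_Ioi (-a) fun x ↦ V x * g x ^ 2 * p x,
    integral_comp_neg_Ioi (-a) fun x ↦ deriv g x ^ 2 * p x, neg_neg] at hlel
  have hintl' : IntegrableOn (fun x ↦ V x * g x ^ 2 * p x) (Iic a) :=
    Iff.mpr integrableOn_Iic_iff_integrableOn_Iio <| by
      simpa only [neg_neg] using hintl.comp_neg_Iio
  rw [← intervalIntegral.integral_Iic_add_Ioi hintl' hintr,
    ← intervalIntegral.integral_Iic_add_Ioi hint.integrableOn hint.integrableOn (b := a)]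
  refine ⟨?_, by linarith⟩
  rw [← integrableOn_univ, ← Iic_union_Ioi (a := a)]
  exact hintl'.union hintr

end Hardy

section LogSobolev

variable {C κ a : ℝ} {q V f : ℝ → ℝ}

lemma integrable_sq_mul_of_integrable_mul_sq_sub (hqc : Continuous q) (hq0 : ∀ x, 0 ≤ q x)
    (hq : Integrable q) (hV : ∀ x, 2 ≤ V x) (hf : Continuous f)
    (hVf : Integrable fun x ↦ V x * (f x - f a) ^ 2 * q x) :
    Integrable fun x ↦ f x ^ 2 * q x := by
  refine (hVf.add (hq.const_mul (2 * f a ^ 2))).mono' (by fun_prop)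
    (Eventually.of_forall fun x ↦ ?_)
  rw [norm_of_nonneg (mul_nonneg (sq_nonneg _) (hq0 x)), Pi.add_apply, ← add_mul]
  refine mul_le_mul_of_nonneg_right ?_ (hq0 x)
  linarith [mul_le_mul_of_nonneg_right (hV x) (sq_nonneg (f x - f a)),
    sq_nonneg (f x - 2 * f a)]

/-- The growth condition relating a weight `V` to a density `q` seen from `a`: Cauchy–Schwarz then
gives `4 (f x - f a)² ≤ κ (∫ f'² q) exp (V x / 4)`, so that the logarithm of the relative size of
`f² / ∫ f'² q` is dominated by `V`. -/
def DominatesLogGrowth (κ a : ℝ) (q V : ℝ → ℝ) : Prop :=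
  ∀ x, ∀ t ∈ uIoc a x, 4 * |x - a| ≤ κ * exp (V x / 4) * q t

lemma DominatesLogGrowth.four_mul_sq_sub_le (hgrowth : DominatesLogGrowth κ a q V)
    (hq0 : ∀ x, 0 ≤ q x) (hκ : 0 ≤ κ) (hf : ContDiff ℝ 1 f)
    (hint : Integrable fun x ↦ deriv f x ^ 2 * q x) {E : ℝ}
    (hE : ∫ x, deriv f x ^ 2 * q x ≤ E) (x : ℝ) :
    4 * (f x - f a) ^ 2 ≤ κ * E * exp (V x / 4) := by
  have hM : 0 ≤ κ * exp (V x / 4) := by positivity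
  have hsq : (f x - f a) ^ 2 ≤ κ * exp (V x / 4) / 4 * ∫ t, deriv f t ^ 2 * q t :=
    sq_sub_le_mul_integral_deriv_sq_mul hf hq0 (by positivity) hint fun t ht ↦ by
      linarith [hgrowth x t ht]
  linarith [mul_le_mul_of_nonneg_left hE hM]

variable (hqc : Continuous q) (hq0 : ∀ x, 0 ≤ q x) (hq : Integrable q) (hV18 : ∀ x, 18 ≤ V x)
  (hκ : 0 < κ) (hhardy : HardyInequality C a q V) (hgrowth : DominatesLogGrowth κ a q V)
  (hf : ContDiff ℝ 1 f) (hint : Integrable fun x ↦ deriv f x ^ 2 * q x)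

include hqc hq0 hq hV18 hκ hhardy hgrowth hf hint

lemma integral_mul_klFun_le_of_hardy (hq1 : ∫ x, q x = 1) {E : ℝ} (hE0 : 0 < E)
    (hE : ∫ x, deriv f x ^ 2 * q x ≤ E) :
    Integrable (fun x ↦ (f a ^ 2 + κ * E) * klFun (f x ^ 2 / (f a ^ 2 + κ * E)) * q x) ∧
      ∫ x, (f a ^ 2 + κ * E) * klFun (f x ^ 2 / (f a ^ 2 + κ * E)) * q x ≤
        C * (∫ x, deriv f x ^ 2 * q x) + 2 * (κ * E) := by
  have hfc := hf.continuous
  have hK : 0 < κ * E := mul_pos hκ hE0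
  have hc : 0 < f a ^ 2 + κ * E := by positivity
  obtain ⟨hVf, hVfle⟩ := hhardy (fun x ↦ f x - f a) (hf.sub contDiff_const) (sub_self _)
    (by simpa only [deriv_sub_const] using hint)
  simp only [deriv_sub_const] at hVfle
  have hle : ∀ x, (f a ^ 2 + κ * E) * klFun (f x ^ 2 / (f a ^ 2 + κ * E)) * q x ≤
      V x * (f x - f a) ^ 2 * q x + 2 * (κ * E) * q x := fun x ↦ by
    rw [← add_mul]
    exact mul_le_mul_of_nonneg_right (mul_klFun_sq_div_le hK (hV18 x)
      (hgrowth.four_mul_sq_sub_le hq0 hκ.le hf hint hE x)) (hq0 x)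
  have hbound := hVf.add (hq.const_mul (2 * (κ * E)))
  have hkl : Integrable
      (fun x ↦ (f a ^ 2 + κ * E) * klFun (f x ^ 2 / (f a ^ 2 + κ * E)) * q x) := by
    refine hbound.mono' ?_ (Eventually.of_forall fun x ↦ ?_)
    · have := continuous_klFun
      fun_prop
    · rw [norm_of_nonneg (mul_nonneg (mul_nonneg hc.le (klFun_nonneg (by positivity))) (hq0 x))]
      exact hle x
  refine ⟨hkl, (integral_mono hkl hbound hle).trans ?_⟩
  simp only [Pi.add_apply]
  rw [integral_add hVf (hq.const_mul _), integral_const_mul, hq1, mul_one]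
  gcongr

theorem logSobolev_of_hardy (hq1 : ∫ x, q x = 1) :
    Integrable (fun x ↦ f x ^ 2 * log (f x ^ 2 / ∫ y, f y ^ 2 * q y) * q x) ∧
      ∫ x, f x ^ 2 * log (f x ^ 2 / ∫ y, f y ^ 2 * q y) * q x ≤
        (C + 2 * κ) * ∫ x, deriv f x ^ 2 * q x := by
  set I := ∫ x, deriv f x ^ 2 * q x
  have hI : 0 ≤ I := integral_nonneg fun x ↦ mul_nonneg (sq_nonneg _) (hq0 x)
  have hf2 : Integrable fun x ↦ f x ^ 2 * q x :=
    integrable_sq_mul_of_integrable_mul_sq_sub hqc hq0 hq (fun x ↦ by linarith [hV18 x])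
      hf.continuous (hhardy (fun x ↦ f x - f a) (hf.sub contDiff_const) (sub_self _)
        (by simpa only [deriv_sub_const] using hint)).1
  have hkl := fun {E : ℝ} ↦
    integral_mul_klFun_le_of_hardy (E := E) hqc hq0 hq hV18 hκ hhardy hgrowth hf hint hq1
  have hc : ∀ {E : ℝ}, 0 < E → 0 < f a ^ 2 + κ * E := fun hE ↦ by positivity
  have hI1 : 0 < I + 1 := by linarith
  refine ⟨integrable_mul_log_div_mul hq hf2 (hc hI1).ne' (hkl hI1 (by linarith)).1 _, ?_⟩
  refine le_of_forall_pos_le_add fun ε hε ↦ ?_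
  have hE : 0 < I + ε / (2 * κ) := by positivity
  obtain ⟨hklint, hklle⟩ := hkl hE (le_add_of_nonneg_right (by positivity))
  calc ∫ x, f x ^ 2 * log (f x ^ 2 / ∫ y, f y ^ 2 * q y) * q x
      ≤ C * I + 2 * (κ * (I + ε / (2 * κ))) :=
        (integral_mul_log_div_le_integral_mul_klFun hq hq0 hq1 hf2 (fun x ↦ sq_nonneg _) (hc hE)
          hklint).trans hklle
    _ = (C + 2 * κ) * I + ε := by
        field_simp
        ring

end LogSobolev

section GaussPlateau

/-- The shape of the target on one side of its mode: a Gaussian bump at `a` plus a plateau ending at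
`b` with a Gaussian tail. -/
noncomputable def gaussPlateau (A B a b x : ℝ) : ℝ :=
  A * exp (-(x - a) ^ 2 / 2) + B * exp (-(max (x - b) 0) ^ 2 / 2)

/-- A logarithmic flux for the Hardy inequality: `gaussPlateau A B a b * plateauFlux m b` solves the
Riccati inequality. It decreases steeply up to `b + 1`, where the drift of the tail is too weak to
help, and grows slowly afterwards. -/
noncomputable def plateauFlux (m b x : ℝ) : ℝ :=
  3 * m ^ 2 + 6 + 4 * m ^ 2 * (b + 1 - x) + (4 * m ^ 2 + 6) * max (x - (b + 1)) 0

variable {A B a b m x : ℝ}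

lemma gaussPlateau_nonneg (hA : 0 ≤ A) (hB : 0 ≤ B) (a b x : ℝ) : 0 ≤ gaussPlateau A B a b x := by
  unfold gaussPlateau
  positivity

lemma continuous_gaussPlateau (A B a b : ℝ) : Continuous (gaussPlateau A B a b) := by
  unfold gaussPlateau
  fun_prop

lemma continuous_plateauFlux (m b : ℝ) : Continuous (plateauFlux m b) := by
  unfold plateauFlux
  fun_prop

lemma plateauFlux_of_le (m : ℝ) (hx : x ≤ b + 1) :
    plateauFlux m b x = 3 * m ^ 2 + 6 + 4 * m ^ 2 * (b + 1 - x) := by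
  rw [plateauFlux, max_eq_right (by linarith), mul_zero, add_zero]

lemma plateauFlux_of_ge (m : ℝ) (hx : b + 1 ≤ x) :
    plateauFlux m b x = 3 * m ^ 2 + 6 * (x - b) := by
  rw [plateauFlux, max_eq_left (by linarith)]
  ring

lemma plateauFlux_nonneg (m b x : ℝ) : 0 ≤ plateauFlux m b x := by
  rcases le_total x (b + 1) with hx | hx
  · have := sub_nonneg.mpr hx
    rw [plateauFlux_of_le m hx]
    positivity
  · have : 0 ≤ x - b := by linarith
    rw [plateauFlux_of_ge m hx]
    positivity

lemma hasDerivWithinAt_max_sub_zero (b x : ℝ) :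
    HasDerivWithinAt (fun x ↦ max (x - b) 0) (if x < b then 0 else 1) (Ioi x) x := by
  split_ifs with hx
  · refine ((hasDerivAt_const x 0).congr_of_eventuallyEq ?_).hasDerivWithinAt
    filter_upwards [Iio_mem_nhds hx] with y hy
    exact max_eq_right (sub_nonpos.mpr (le_of_lt hy))
  · have hxb : b ≤ x := not_lt.mp hx
    refine ((hasDerivAt_id x).sub_const b).hasDerivWithinAt.congr (fun y hy ↦ ?_) ?_
    · exact max_eq_left (sub_nonneg.mpr (hxb.trans (le_of_lt hy)))
    · exact max_eq_left (sub_nonneg.mpr hxb)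

lemma hasDerivWithinAt_max_sub_zero_sq (b x : ℝ) :
    HasDerivWithinAt (fun x ↦ (max (x - b) 0) ^ 2) (2 * max (x - b) 0) (Ioi x) x := by
  refine ((hasDerivWithinAt_max_sub_zero b x).pow 2).congr_deriv ?_
  split_ifs with hx
  · simp [max_eq_right (sub_nonpos.mpr hx.le)]
  · simp

lemma hasDerivWithinAt_gaussPlateau (A B a b x : ℝ) :
    HasDerivWithinAt (gaussPlateau A B a b)
      (A * (exp (-(x - a) ^ 2 / 2) * -(x - a)) +
        B * (exp (-(max (x - b) 0) ^ 2 / 2) * -max (x - b) 0)) (Ioi x) x := by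
  have hbump : HasDerivWithinAt (fun x ↦ -(x - a) ^ 2 / 2) (-(x - a)) (Ioi x) x := by
    refine ((((hasDerivWithinAt_id x _).sub_const a).pow 2).neg.div_const 2).congr_deriv ?_
    simp only [Nat.cast_ofNat, id_eq, Nat.add_one_sub_one, pow_one, mul_one]
    ring
  have htail : HasDerivWithinAt (fun x ↦ -(max (x - b) 0) ^ 2 / 2) (-max (x - b) 0) (Ioi x) x :=
    ((hasDerivWithinAt_max_sub_zero_sq b x).neg.div_const 2).congr_deriv (by ring)
  exact (hbump.exp.const_mul A).add (htail.exp.const_mul B)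

lemma exists_hasDerivWithinAt_gaussPlateau_le (B : ℝ) (hA : 0 ≤ A) (hab : a ≤ b) (hx : a ≤ x) :
    ∃ p', HasDerivWithinAt (gaussPlateau A B a b) p' (Ioi x) x ∧
      p' ≤ -max (x - b) 0 * gaussPlateau A B a b x := by
  refine ⟨_, hasDerivWithinAt_gaussPlateau A B a b x, ?_⟩
  have hdrift : max (x - b) 0 ≤ x - a := max_le (by linarith) (by linarith)
  have := mul_le_mul_of_nonneg_left hdrift (mul_nonneg hA (exp_nonneg (-(x - a) ^ 2 / 2)))
  unfold gaussPlateau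
  linarith

lemma hasDerivWithinAt_plateauFlux (m b x : ℝ) :
    HasDerivWithinAt (plateauFlux m b) (if x < b + 1 then -(4 * m ^ 2) else 6) (Ioi x) x := by
  refine (((((hasDerivWithinAt_id x _).const_sub (b + 1)).const_mul (4 * m ^ 2)).const_add
    (3 * m ^ 2 + 6)).add
      ((hasDerivWithinAt_max_sub_zero (b + 1) x).const_mul (4 * m ^ 2 + 6))).congr_deriv ?_
  split_ifs <;> ring

lemma plateauFlux_riccati_of_lt (hm : 10 ≤ m) (hb : b - 2 * m ≤ x) (hx : x < b + 1) :
    -(4 * m ^ 2) - max (x - b) 0 * plateauFlux m b x + plateauFlux m b x ^ 2 / (81 * m ^ 4) ≤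
      -(2 * m ^ 2 + 3 * (max (x - b) 0) ^ 2) := by
  have hy0 : 0 ≤ max (x - b) 0 := le_max_right _ _
  have hy1 : max (x - b) 0 ≤ 1 := max_le (by linarith) zero_le_one
  have hm2 : 100 ≤ m ^ 2 := by nlinarith
  have hflux0 := plateauFlux_nonneg m b x
  have hflux : plateauFlux m b x ≤ 9 * m ^ 3 := by
    rw [plateauFlux_of_le m hx.le]
    nlinarith [mul_le_mul_of_nonneg_left (show b + 1 - x ≤ 2 * m + 1 by linarith) (sq_nonneg m)]
  have hquad : plateauFlux m b x ^ 2 / (81 * m ^ 4) ≤ m ^ 2 := by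
    rw [div_le_iff₀ (by positivity)]
    calc plateauFlux m b x ^ 2 ≤ (9 * m ^ 3) ^ 2 := by gcongr
      _ = m ^ 2 * (81 * m ^ 4) := by ring
  nlinarith [mul_nonneg hy0 hflux0]

lemma plateauFlux_riccati_of_ge (hm : 10 ≤ m) (hx : b + 1 ≤ x) :
    6 - max (x - b) 0 * plateauFlux m b x + plateauFlux m b x ^ 2 / (81 * m ^ 4) ≤
      -(2 * m ^ 2 + 3 * (max (x - b) 0) ^ 2) := by
  rw [plateauFlux_of_ge m hx, max_eq_left (by linarith)]
  obtain ⟨y, rfl⟩ : ∃ y, x = b + y := ⟨x - b, by ring⟩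
  rw [add_sub_cancel_left]
  have hy : 1 ≤ y := by linarith
  have hm2 : 100 ≤ m ^ 2 := by nlinarith
  have hm4 : 10000 ≤ m ^ 4 := by nlinarith
  have hquad : (3 * m ^ 2 + 6 * y) ^ 2 / (81 * m ^ 4) ≤ 1 + y ^ 2 := by
    rw [div_le_iff₀ (by positivity)]
    have hsplit : (3 * m ^ 2 + 6 * y) ^ 2 ≤ 18 * m ^ 4 + 72 * y ^ 2 := by
      linarith [sq_nonneg (3 * m ^ 2 - 6 * y)]
    linarith [mul_le_mul_of_nonneg_right hm4 (sq_nonneg y), sq_nonneg y]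
  nlinarith [mul_le_mul_of_nonneg_left hy (sq_nonneg m)]

lemma plateauFlux_riccati (hm : 10 ≤ m) (hb : b - 2 * m ≤ x) :
    (if x < b + 1 then -(4 * m ^ 2) else 6) - max (x - b) 0 * plateauFlux m b x +
      plateauFlux m b x ^ 2 / (81 * m ^ 4) ≤ -(2 * m ^ 2 + 3 * (max (x - b) 0) ^ 2) := by
  split_ifs with hx
  · exact plateauFlux_riccati_of_lt hm hb hx
  · exact plateauFlux_riccati_of_ge hm (not_lt.mp hx)

lemma isRiccatiSupersolution_gaussPlateau (hm : 10 ≤ m) (hA : 0 ≤ A) (hB : 0 ≤ B) (hab : a ≤ b)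
    (hba : b ≤ a + 2 * m) :
    IsRiccatiSupersolution (81 * m ^ 4) a (gaussPlateau A B a b)
      (fun x ↦ 2 * m ^ 2 + 3 * (max (x - b) 0) ^ 2)
      (fun x ↦ gaussPlateau A B a b x * plateauFlux m b x) where
  continuousOn :=
    ((continuous_gaussPlateau A B a b).mul (continuous_plateauFlux m b)).continuousOn
  nonneg x _ := mul_nonneg (gaussPlateau_nonneg hA hB a b x) (plateauFlux_nonneg m b x)
  exists_deriv x hx := by
    obtain ⟨p', hp', hp'le⟩ := exists_hasDerivWithinAt_gaussPlateau_le B hA hab (le_of_lt hx)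
    refine ⟨_, hp'.mul (hasDerivWithinAt_plateauFlux m b x), ?_⟩
    have hp0 := gaussPlateau_nonneg hA hB a b x
    have hriccati := mul_le_mul_of_nonneg_left
      (plateauFlux_riccati hm (by linarith [mem_Ioi.mp hx] : b - 2 * m ≤ x)) hp0
    have hdrift := mul_le_mul_of_nonneg_right hp'le (plateauFlux_nonneg m b x)
    have hsq : (gaussPlateau A B a b x * plateauFlux m b x) ^ 2 /
        (81 * m ^ 4 * gaussPlateau A B a b x) =
        gaussPlateau A B a b x * (plateauFlux m b x ^ 2 / (81 * m ^ 4)) := by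
      field_simp
    rw [hsq]
    linarith

end GaussPlateau

section InfDist

variable {a b c t x : ℝ}

lemma infDist_Icc (hab : a ≤ b) (x : ℝ) :
    Metric.infDist x (Icc a b) = max (max (a - x) (x - b)) 0 := by
  refine le_antisymm ?_ ((Metric.le_infDist (nonempty_Icc.mpr hab)).mpr fun y hy ↦ ?_)
  · refine (Metric.infDist_le_dist_of_mem (projIcc a b hab x).2).trans ?_
    rw [coe_projIcc, dist_eq]
    grind
  · rw [dist_eq]
    exact max_le (max_le (by grind) (by grind)) (abs_nonneg _)

lemma infDist_Icc_of_left_le (hab : a ≤ b) (hx : a ≤ x) :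
    Metric.infDist x (Icc a b) = max (x - b) 0 := by
  rw [infDist_Icc hab]
  grind

lemma infDist_neg_Icc_of_neg_right_le (hab : a ≤ b) (hx : -b ≤ x) :
    Metric.infDist (-x) (Icc a b) = max (x - -a) 0 := by
  rw [infDist_Icc hab]
  grind

lemma infDist_Icc_le_of_mem_uIcc (hc : c ∈ Icc a b) (ht : t ∈ uIcc c x) :
    Metric.infDist t (Icc a b) ≤ Metric.infDist x (Icc a b) := by
  rw [infDist_Icc (hc.1.trans hc.2), infDist_Icc (hc.1.trans hc.2)]
  rcases mem_uIcc.mp ht with h | h <;> grind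

lemma abs_sub_le_sub_add_infDist_Icc (hc : c ∈ Icc a b) (x : ℝ) :
    |x - c| ≤ b - a + Metric.infDist x (Icc a b) := by
  rw [infDist_Icc (hc.1.trans hc.2)]
  grind

lemma comp_infDist_Icc_eq_add_indicator (hab : a ≤ b) (φ : ℝ → ℝ) (x : ℝ) :
    φ (Metric.infDist x (Icc a b)) = (Ioi 0).indicator φ (a - x) +
      (Icc a b).indicator (fun _ ↦ φ 0) x + (Ioi 0).indicator φ (x - b) := by
  rw [infDist_Icc hab]
  simp only [indicator_apply, mem_Ioi, mem_Icc]
  grind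

variable {φ : ℝ → ℝ} (hab : a ≤ b) (hφ : IntegrableOn φ (Ioi 0))

include hab hφ

lemma integrable_comp_infDist_Icc : Integrable fun x ↦ φ (Metric.infDist x (Icc a b)) := by
  have hφ' := hφ.integrable_indicator measurableSet_Ioi
  have hconst : Integrable ((Icc a b).indicator fun _ ↦ φ 0) :=
    (integrableOn_const (by simp)).integrable_indicator measurableSet_Icc
  simp_rw [comp_infDist_Icc_eq_add_indicator hab φ]
  exact ((hφ'.comp_sub_left a).add hconst).add (hφ'.comp_sub_right b)

lemma integral_comp_infDist_Icc :
    ∫ x, φ (Metric.infDist x (Icc a b)) = (b - a) * φ 0 + 2 * ∫ x in Ioi 0, φ x := by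
  have hφ' := hφ.integrable_indicator measurableSet_Ioi
  have hconst : Integrable ((Icc a b).indicator fun _ ↦ φ 0) :=
    (integrableOn_const (by simp)).integrable_indicator measurableSet_Icc
  simp_rw [comp_infDist_Icc_eq_add_indicator hab φ]
  rw [integral_add ((hφ'.comp_sub_left a).fun_add hconst) (hφ'.comp_sub_right b),
    integral_add (hφ'.comp_sub_left a) hconst, integral_sub_left_eq_self _ volume a,
    integral_sub_right_eq_self _ b, integral_indicator measurableSet_Ioi,
    integral_indicator measurableSet_Icc, setIntegral_const, volume_real_Icc_of_le hab,
    smul_eq_mul]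
  ring

end InfDist

section PlateauHardy

/-- The weight of the Hardy inequality for a Gaussian bump on a plateau over `[a, b]`: quadratic in
the distance to the plateau, and at the level `2 m²` on it. -/
noncomputable def plateauWeight (m a b x : ℝ) : ℝ :=
  2 * m ^ 2 + 3 * Metric.infDist x (Icc a b) ^ 2

variable {A B a b c m : ℝ}

lemma continuous_plateauWeight (m a b : ℝ) : Continuous (plateauWeight m a b) := by
  have := Metric.continuous_infDist_pt (Icc a b)
  unfold plateauWeight
  fun_prop

lemma two_mul_sq_le_plateauWeight (m a b x : ℝ) : 2 * m ^ 2 ≤ plateauWeight m a b x :=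
  le_add_of_nonneg_right (by positivity)

theorem hardyInequality_gauss_add_plateau (hm : 10 ≤ m) (hA : 0 ≤ A) (hB : 0 < B)
    (hc : c ∈ Icc a b) (hca : c ≤ a + 2 * m) (hbc : b ≤ c + 2 * m) :
    HardyInequality (81 * m ^ 4) c
      (fun x ↦ A * exp (-(x - c) ^ 2 / 2) + B * exp (-Metric.infDist x (Icc a b) ^ 2 / 2))
      (plateauWeight m a b) := by
  have hab := hc.1.trans hc.2
  have := Metric.continuous_infDist_pt (Icc a b)
  have hright : EqOn (fun x ↦ max (x - b) 0) (fun x ↦ Metric.infDist x (Icc a b)) (Ioi c) :=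
    fun x hx ↦ (infDist_Icc_of_left_le hab (hc.1.trans (le_of_lt hx))).symm
  have hleft : EqOn (fun x ↦ max (x - -a) 0) (fun x ↦ Metric.infDist (-x) (Icc a b))
      (Ioi (-c)) := fun x hx ↦
    (infDist_neg_Icc_of_neg_right_le hab ((neg_le_neg hc.2).trans (le_of_lt hx))).symm
  refine hardyInequality_of_isRiccatiSupersolution (by positivity) (by fun_prop)
    (fun x ↦ by positivity) (continuous_plateauWeight m a b)
    (fun x ↦ le_trans (by positivity) (two_mul_sq_le_plateauWeight m a b x))
    ((isRiccatiSupersolution_gaussPlateau hm hA hB.le hc.2 hbc).congr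
      (fun x hx ↦ ?_) fun x hx ↦ ?_)
    ((isRiccatiSupersolution_gaussPlateau hm hA hB.le (neg_le_neg hc.1) (by linarith)).congr
      (fun x hx ↦ ?_) fun x hx ↦ ?_)
  · simp only [gaussPlateau, ← hright hx]
  · simp only [plateauWeight, ← hright hx]
  · simp only [gaussPlateau, ← hleft hx]
    ring_nf
  · simp only [plateauWeight, ← hleft hx]

end PlateauHardy

section Target

variable {m : ℝ}

lemma gaussAt_eq_gaussianPDFReal (m : ℝ) : gaussAt m = ProbabilityTheory.gaussianPDFReal m 1 := by
  ext x
  simp only [gaussAt, ProbabilityTheory.gaussianPDFReal, NNReal.coe_one, mul_one]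
  exact div_eq_inv_mul _ _

lemma integral_Ioi_exp_neg_sq_div_two : ∫ x in Ioi (0 : ℝ), exp (-x ^ 2 / 2) = √(2 * π) / 2 := by
  convert integral_gaussian_Ioi (1 / 2) using 3 <;> ring_nf

lemma integrable_exp_neg_sq_div_two : Integrable fun x : ℝ ↦ exp (-x ^ 2 / 2) := by
  convert integrable_exp_neg_mul_sq (one_half_pos (α := ℝ)) using 3
  ring

lemma integrable_smUnif (hm : 0 ≤ m) : Integrable (smUnif m) :=
  (integrable_comp_infDist_Icc (φ := fun d ↦ exp (-d ^ 2 / 2)) (by linarith)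
    integrable_exp_neg_sq_div_two.integrableOn).div_const _

lemma integral_smUnif (hm : 0 ≤ m) : ∫ x, smUnif m x = 1 := by
  have hZ : 0 < 3 * m + √(2 * π) := by positivity
  unfold smUnif
  rw [integral_div, integral_comp_infDist_Icc (φ := fun d ↦ exp (-d ^ 2 / 2)) (by linarith)
    integrable_exp_neg_sq_div_two.integrableOn, integral_Ioi_exp_neg_sq_div_two,
    div_eq_one_iff_eq hZ.ne']
  simp only [ne_eq, two_ne_zero, not_false_eq_true, zero_pow, neg_zero, zero_div, exp_zero]
  ring

lemma exp_neg_sq_div_four_le_one (m : ℝ) : exp (-m ^ 2 / 4) ≤ 1 :=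
  exp_le_one_iff.mpr (by linarith [sq_nonneg m])

lemma continuous_piDens (m : ℝ) : Continuous (piDens m) := by
  have := Metric.continuous_infDist_pt (Icc (-m) (2 * m))
  unfold piDens gaussAt smUnif
  fun_prop

lemma integrable_piDens (hm : 0 ≤ m) : Integrable (piDens m) :=
  ((gaussAt_eq_gaussianPDFReal m ▸ ProbabilityTheory.integrable_gaussianPDFReal m 1).const_mul
    _).add ((integrable_smUnif hm).const_mul _)

lemma integral_piDens (hm : 0 ≤ m) : ∫ x, piDens m x = 1 := by
  have hgauss := ProbabilityTheory.integrable_gaussianPDFReal m 1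
  unfold piDens
  rw [gaussAt_eq_gaussianPDFReal,
    integral_add (hgauss.const_mul _) ((integrable_smUnif hm).const_mul _), integral_const_mul,
    integral_const_mul, integral_smUnif hm,
    ProbabilityTheory.integral_gaussianPDFReal_eq_one m one_ne_zero]
  ring

lemma exp_mul_smUnif_le_piDens (m x : ℝ) : exp (-m ^ 2 / 4) * smUnif m x ≤ piDens m x := by
  have := sub_nonneg.mpr (exp_neg_sq_div_four_le_one m)
  unfold piDens gaussAt
  exact le_add_of_nonneg_left (by positivity)

lemma piDens_nonneg (hm : 0 ≤ m) (x : ℝ) : 0 ≤ piDens m x := by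
  refine le_trans ?_ (exp_mul_smUnif_le_piDens m x)
  unfold smUnif
  positivity

lemma hardyInequality_piDens (hm : 10 ≤ m) :
    HardyInequality (81 * m ^ 4) m (piDens m) (plateauWeight m (-m) (2 * m)) := by
  have hbump := sub_nonneg.mpr (exp_neg_sq_div_four_le_one m)
  convert hardyInequality_gauss_add_plateau (m := m)
    (A := (1 - exp (-m ^ 2 / 4)) / √(2 * π)) (B := exp (-m ^ 2 / 4) / (3 * m + √(2 * π)))
    hm (by positivity) (by positivity) (c := m) (a := -m) (b := 2 * m)
    ⟨by linarith, by linarith⟩ (by linarith) (by linarith) using 1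
  ext x
  unfold piDens gaussAt smUnif
  ring

lemma four_mul_le_pow_mul_exp (hm : 10 ≤ m) (d : ℝ) :
    4 * (3 * m + d) * (4 * m) ≤ m ^ 3 * exp (m ^ 2 / 4 + d ^ 2 / 4) := by
  have hm3 : 100 * m ≤ m ^ 3 := by
    nlinarith [mul_le_mul hm hm (by norm_num) (by linarith)]
  have hexp := add_one_le_exp (m ^ 2 / 4 + d ^ 2 / 4)
  calc 4 * (3 * m + d) * (4 * m) ≤ 100 * m * (m ^ 2 / 4 + d ^ 2 / 4 + 1) := by
        nlinarith [sq_nonneg (d - 1)]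
    _ ≤ m ^ 3 * exp (m ^ 2 / 4 + d ^ 2 / 4) := by gcongr

lemma dominatesLogGrowth_piDens (hm : 10 ≤ m) :
    DominatesLogGrowth (m ^ 3) m (piDens m) (plateauWeight m (-m) (2 * m)) := by
  intro x t ht
  have hmem : m ∈ Icc (-m) (2 * m) := ⟨by linarith, by linarith⟩
  have hdist := abs_sub_le_sub_add_infDist_Icc hmem x
  have hmono := infDist_Icc_le_of_mem_uIcc hmem (uIoc_subset_uIcc ht)
  have hZ : 3 * m + √(2 * π) ≤ 4 * m := by
    have : √(2 * π) ≤ 10 := (sqrt_le_left (by norm_num)).mpr (by linarith [pi_le_four])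
    linarith
  calc 4 * |x - m|
      ≤ m ^ 3 * exp (m ^ 2 / 4 + Metric.infDist x (Icc (-m) (2 * m)) ^ 2 / 4) / (4 * m) := by
        rw [le_div_iff₀ (by positivity)]
        refine le_trans ?_ (four_mul_le_pow_mul_exp hm _)
        gcongr
        linarith
    _ = m ^ 3 * exp (plateauWeight m (-m) (2 * m) x / 4) * (exp (-m ^ 2 / 4) *
          (exp (-Metric.infDist x (Icc (-m) (2 * m)) ^ 2 / 2) / (4 * m))) := by
        rw [mul_div_assoc', mul_div_assoc', ← exp_add, mul_assoc, ← exp_add, plateauWeight]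
        ring_nf
    _ ≤ m ^ 3 * exp (plateauWeight m (-m) (2 * m) x / 4) *
          (exp (-m ^ 2 / 4) * smUnif m t) := by
        unfold smUnif
        gcongr
        exact Metric.infDist_nonneg
    _ ≤ m ^ 3 * exp (plateauWeight m (-m) (2 * m) x / 4) * piDens m t := by
        gcongr
        exact exp_mul_smUnif_le_piDens m t

end Target

theorem unimodal_target_log_sobolev_general {m : ℝ} (hm : 10 ≤ m) {f : ℝ → ℝ}
    (hf : ContDiff ℝ 1 f) (hint : Integrable fun x ↦ deriv f x ^ 2 * piDens m x) :
    Integrable (fun x ↦ f x ^ 2 * log (f x ^ 2 / ∫ y, f y ^ 2 * piDens m y) * piDens m x) ∧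
      ∫ x, f x ^ 2 * log (f x ^ 2 / ∫ y, f y ^ 2 * piDens m y) * piDens m x ≤
        2 * (41 * m ^ 4) * ∫ x, deriv f x ^ 2 * piDens m x := by
  have hm0 : 0 ≤ m := by linarith
  have hweight : ∀ x, 18 ≤ plateauWeight m (-m) (2 * m) x := fun x ↦
    le_trans (by nlinarith) (two_mul_sq_le_plateauWeight m (-m) (2 * m) x)
  have henergy : 0 ≤ ∫ x, deriv f x ^ 2 * piDens m x :=
    integral_nonneg fun x ↦ mul_nonneg (sq_nonneg _) (piDens_nonneg hm0 x)
  obtain ⟨hentropy, hle⟩ := logSobolev_of_hardy (continuous_piDens m) (piDens_nonneg hm0)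
    (integrable_piDens hm0) hweight (by positivity) (hardyInequality_piDens hm)
    (dominatesLogGrowth_piDens hm) hf hint (integral_piDens hm0)
  refine ⟨hentropy, hle.trans (mul_le_mul_of_nonneg_right ?_ henergy)⟩
  have : 10 * m ^ 3 ≤ m ^ 4 := by nlinarith [pow_nonneg hm0 3]
  linarith [pow_nonneg hm0 3]

/-- For m ≥ 10, the unimodal target
π = (1−e^{−m²/4})N(m,1) + e^{−m²/4}u_m satisfies a log-Sobolev inequality with
constant 81m⁵. -/
theorem unimodal_target_log_sobolev
    (m : ℝ) (hm : 10 ≤ m) :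
    ∀ f : ℝ → ℝ, ContDiff ℝ (⊤ : ℕ∞) f → HasCompactSupport f →
      (∫ x, (f x) ^ 2 * Real.log ((f x) ^ 2 / ∫ y, (f y) ^ 2 * piDens m y) * piDens m x)
        ≤ 2 * (81 * m ^ 5) * ∫ x, (deriv f x) ^ 2 * piDens m x := by
  intro f hf hsupp
  have hf1 : ContDiff ℝ 1 f := hf.of_le (by exact_mod_cast le_top)
  have hint : Integrable fun x ↦ deriv f x ^ 2 * piDens m x :=
    Continuous.integrable_of_hasCompactSupport
      ((hf1.continuous_deriv_one.pow 2).mul (continuous_piDens m))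
      ((hsupp.deriv.comp_left (zero_pow two_ne_zero)).mul_right)
  refine (unimodal_target_log_sobolev_general hm hf1 hint).2.trans ?_
  gcongr
  · exact integral_nonneg fun x ↦ mul_nonneg (sq_nonneg _) (piDens_nonneg (by linarith) x)
  all_goals linarith
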